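/- Let r,q ≥ 1 with rq > 1. Transport the connection digraph of σ_{rq} to labels: an edge from label u to label v means the edge of the connection digraph between their meander positions. Then there is an edge from u to v if and only if neither u nor v equals A^0_0 and the pair occurs in the following list: (vertical Chafee-Infante stacks, for each fixed 0 ≤ j ≤ r) A^j_{k+1} → A^j_k for 0 ≤ k ≤ q−1; A^j_{k+1} → B^j_{k−1} for 1 ≤ k ≤ q−1; B^j_k → A^j_k for 0 ≤ k ≤ q; B^j_k → B^j_{k−1} for 1 ≤ k ≤ q; (slanted Chafee-Infante stacks, for each fixed 0 ≤ k ≤ q) A^{j+1}_k → A^j_k for 0 ≤ j ≤ r−1; A^{j+1}_k → B^{j−1}_k for 1 ≤ j ≤ r−1; B^j_k → A^j_k for 0 ≤ j ≤ r; B^j_k → B^{j−1}_k for 1 ≤ j ≤ r. -/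

import Mathlib

/-- Morse numbers `i_j` of a permutation `σ` of `{1,…,N}` (extended to `ℕ`),
via the recursion `i_1 = 0`,
`i_{j+1} = i_j + (-1)^(j+1) * sign (σ⁻¹(j+1) - σ⁻¹(j))`. -/
def morse (σ : Equiv.Perm ℕ) : ℕ → ℤ
  | 0 => 0
  | 1 => 0
  | (j+2) => morse σ (j+1) +
      (-1)^(j+2) * Int.sign ((σ.symm (j+2) : ℤ) - (σ.symm (j+1) : ℤ))

/-- Zero numbers `z_{j k}`, recursion in the first index `j`, second index `k` fixed:
`z_{1k} = 0`, `z_{kk} = i_k`, `z_{k+1,k} = min (i_k, i_{k+1})`, and otherwise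
`z_{j+1,k} = z_{jk} + ((-1)^(j+1)/2) * (sign (σ⁻¹(j+1) - σ⁻¹(k)) - sign (σ⁻¹(j) - σ⁻¹(k)))`. -/
def zrec (σ : Equiv.Perm ℕ) (k : ℕ) : ℕ → ℤ
  | 0 => 0
  | 1 => 0
  | (j+2) =>
      if j+2 = k then morse σ k
      else if j+1 = k then min (morse σ k) (morse σ (k+1))
      else zrec σ k (j+1) +
        ((-1)^(j+2) * (Int.sign ((σ.symm (j+2) : ℤ) - (σ.symm k : ℤ))
          - Int.sign ((σ.symm (j+1) : ℤ) - (σ.symm k : ℤ)))) / 2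

/-- The zero number `z_{m n}`. -/
def zfun (σ : Equiv.Perm ℕ) (m n : ℕ) : ℤ := zrec σ n m

/-- The connection digraph of a dissipative Morse permutation `σ` of `{1,…,N}`:
an edge `m ⤳ n` iff `i_m = i_n + 1` and no `w` strictly between `m` and `n`
blocks, i.e. satisfies `z_{mw} = z_{wn} = z_{mn}`. -/
def hasEdge (N : ℕ) (σ : Equiv.Perm ℕ) (m n : ℕ) : Prop :=
  1 ≤ m ∧ m ≤ N ∧ 1 ≤ n ∧ n ≤ N ∧
  morse σ m = morse σ n + 1 ∧
  ¬ ∃ w : ℕ, min m n < w ∧ w < max m n ∧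
      zfun σ m w = zfun σ w n ∧ zfun σ w n = zfun σ m n

/-- A dissipative permutation of `{1,…,N}`. -/
def Dissipative (N : ℕ) (σ : Equiv.Perm ℕ) : Prop :=
  Set.BijOn σ (Set.Icc 1 N) (Set.Icc 1 N) ∧ σ 1 = 1 ∧ σ N = N

/-- The Morse property: all Morse numbers are nonnegative. -/
def MorseProp (N : ℕ) (σ : Equiv.Perm ℕ) : Prop :=
  ∀ j, 1 ≤ j → j ≤ N → 0 ≤ morse σ j

/-- Morse counts `μ(i) = #{j ∈ {1,…,N} : i_j = i}`. -/
def morseCount (N : ℕ) (σ : Equiv.Perm ℕ) (i : ℤ) : ℕ :=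
  ((Finset.Icc 1 N).filter (fun j => morse σ j = i)).card

/-- The primitive 3-nose permutation `σ_{rq}` of `{1,…,N}`, `N = 2(r+1)(q+1)-1`,
characterized by its defining relations, extended to a permutation of `ℕ`
fixing everything outside `{1,…,N}`. -/
def SigmaRQ (r q : ℕ) (σ : Equiv.Perm ℕ) : Prop :=
  (∀ a, a ∉ Set.Icc 1 (2*(r+1)*(q+1) - 1) → σ a = a) ∧
  (∀ j k, j ≤ r → k ≤ q →
    σ (2*((q+1)*j+k)+1) = 2*(j+(r+1)*k)+1) ∧
  (∀ j k, j ≤ r → k ≤ q → ¬(j = 0 ∧ k = 0) →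
    σ (2*((q+1)*(r-j)+(q-k)+1)) = 2*(j+(r+1)*k))

/-- Tags `A`, `B` of equilibrium labels `A^j_k`, `B^j_k`. -/
inductive Tag | A | B
deriving DecidableEq

/-- The axis position (`h_1`-position) of the label `L^j_k` for parameters `(r,q)`. -/
def axisPos (r q : ℕ) : Tag → ℕ → ℕ → ℕ
  | Tag.A, j, k => if Odd j then (q+1)*(j-1)+k+1 else (q+1)*(2*r+1-j)+(q-k)+1
  | Tag.B, j, k => if Odd j then (q+1)*j+(q-k)+1 else (q+1)*(2*r-j)+k+1

/-- The meander position (`h_0`-position) of the label `L^j_k` for parameters `(r,q)`. -/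
def meanderPos (r q : ℕ) : Tag → ℕ → ℕ → ℕ
  | Tag.A, j, k => if Odd k then (r+1)*(2*q+1-k)+(2*r+1-j) else (r+1)*k+j
  | Tag.B, j, k => if Odd k then (r+1)*(2*q+1-k)+j else (r+1)*(k+1)+(r-j)

/-- The suspension `σ̃` of a dissipative permutation `σ` of `{1,…,N}`:
`σ̃(1) = 1`, `σ̃(N+2) = N+2`, and `σ̃(a+1) = N+2 - σ(a)` for `1 ≤ a ≤ N`. -/
def IsSuspension (N : ℕ) (σ σt : Equiv.Perm ℕ) : Prop :=
  σt 1 = 1 ∧ σt (N+2) = N+2 ∧ ∀ a, 1 ≤ a → a ≤ N → σt (a+1) = N+2 - σ a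

/-- The label `A^0_0` is the distinguished (formal) vertex `⋆`. -/
def IsStar (L : Tag) (j k : ℕ) : Prop := L = Tag.A ∧ j = 0 ∧ k = 0

/-- Tag swap `A ↔ B`, used by the reversor. -/
def tagSwap : Tag → Tag
  | Tag.A => Tag.B
  | Tag.B => Tag.A

/-- The list of edges of the Chafee-Infante lattice `CIS^{rq} ∪ CIS_{rq}`:
vertical Chafee-Infante stacks (fixed `j`) and slanted ones (fixed `k`). -/
def EdgeSpec (r q : ℕ) (L : Tag) (j k : ℕ) (L' : Tag) (j' k' : ℕ) : Prop :=
  -- vertical stacks CIS^j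
  (L = Tag.A ∧ L' = Tag.A ∧ j = j' ∧ k = k'+1 ∧ k ≤ q) ∨
  (L = Tag.A ∧ L' = Tag.B ∧ j = j' ∧ k = k'+2 ∧ k ≤ q) ∨
  (L = Tag.B ∧ L' = Tag.A ∧ j = j' ∧ k = k') ∨
  (L = Tag.B ∧ L' = Tag.B ∧ j = j' ∧ k = k'+1 ∧ k ≤ q) ∨
  -- slanted stacks CIS_k
  (L = Tag.A ∧ L' = Tag.A ∧ k = k' ∧ j = j'+1 ∧ j ≤ r) ∨
  (L = Tag.A ∧ L' = Tag.B ∧ k = k' ∧ j = j'+2 ∧ j ≤ r) ∨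
  (L = Tag.B ∧ L' = Tag.B ∧ k = k' ∧ j = j'+1 ∧ j ≤ r)


def mG (q k : ℕ) : ℕ := if k % 2 = 1 then 2*q+1-k else k

def mO (r : ℕ) (L : Tag) (j k : ℕ) : ℕ :=
  match L with
  | Tag.A => if k % 2 = 1 then 2*r+1-j else j
  | Tag.B => if k % 2 = 1 then j else 2*r+1-j

def aG (r j : ℕ) : ℕ := if j % 2 = 1 then j-1 else 2*r-j

def aO (q : ℕ) (L : Tag) (j k : ℕ) : ℕ :=
  match L with
  | Tag.A => if j % 2 = 1 then k else 2*q+1-k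
  | Tag.B => if j % 2 = 1 then 2*q+1-k else k

theorem mp_eq (r q : ℕ) (L : Tag) (j k : ℕ) (hj : j ≤ r) :
    meanderPos r q L j k = (r+1) * mG q k + mO r L j k := by
  cases L <;> simp only [meanderPos, mG, mO, Nat.odd_iff] <;> split_ifs
  · rfl
  · rfl
  · rfl
  · rw [mul_add]; omega

theorem ap_eq (r q : ℕ) (L : Tag) (j k : ℕ) (hj : j ≤ r) (hk : k ≤ q) :
    axisPos r q L j k = (q+1) * aG r j + aO q L j k + 1 := by
  cases L <;> simp only [axisPos, aG, aO, Nat.odd_iff] <;> split_ifs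
  · rfl
  · rw [show 2*r+1-j = (2*r-j)+1 by omega, mul_add]; omega
  · rw [show j = (j-1)+1 by omega, mul_add]; simp only [Nat.add_sub_cancel]; omega
  · rfl

theorem lex_aux (n G O G' O' : ℕ) (hG : G % 2 = 0) (hG' : G' % 2 = 0) (hO : O < 2*n) (hO' : O' < 2*n) :
    n * G + O < n * G' + O' ↔ (G < G' ∨ G = G' ∧ O < O') := by
  rcases lt_trichotomy G G' with h | h | h
  · have : n * (G+2) ≤ n * G' := Nat.mul_le_mul_left _ (by omega)
    rw [mul_add] at this
    constructor
    · intro _; exact Or.inl h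
    · intro _; omega
  · subst h; omega
  · have : n * (G'+2) ≤ n * G := Nat.mul_le_mul_left _ (by omega)
    rw [mul_add] at this
    constructor
    · intro _; omega
    · intro _; omega

theorem mG_par (q k : ℕ) (hk : k ≤ q) : mG q k % 2 = 0 ∧ mG q k ≤ 2*q := by
  unfold mG; split_ifs <;> omega

theorem mO_lt (r : ℕ) (L : Tag) (j k : ℕ) (hj : j ≤ r) : mO r L j k < 2*(r+1) := by
  cases L <;> simp only [mO] <;> split_ifs <;> omega

theorem aG_par (r j : ℕ) (hj : j ≤ r) : aG r j % 2 = 0 ∧ aG r j ≤ 2*r := by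
  unfold aG; split_ifs <;> omega

theorem aO_lt (q : ℕ) (L : Tag) (j k : ℕ) (hk : k ≤ q) : aO q L j k < 2*(q+1) := by
  cases L <;> simp only [aO] <;> split_ifs <;> omega

theorem mp_lt (r q : ℕ) (L M : Tag) (j k a b : ℕ) (hj : j ≤ r) (hk : k ≤ q) (ha : a ≤ r) (hb : b ≤ q) :
    meanderPos r q L j k < meanderPos r q M a b ↔
      (mG q k < mG q b ∨ mG q k = mG q b ∧ mO r L j k < mO r M a b) := by
  rw [mp_eq _ _ _ _ _ hj, mp_eq _ _ _ _ _ ha]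
  exact lex_aux _ _ _ _ _ (mG_par q k hk).1 (mG_par q b hb).1 (mO_lt _ _ _ _ hj) (mO_lt _ _ _ _ ha)

theorem ap_lt (r q : ℕ) (L M : Tag) (j k a b : ℕ) (hj : j ≤ r) (hk : k ≤ q) (ha : a ≤ r) (hb : b ≤ q) :
    axisPos r q L j k < axisPos r q M a b ↔
      (aG r j < aG r a ∨ aG r j = aG r a ∧ aO q L j k < aO q M a b) := by
  rw [ap_eq _ _ _ _ _ hj hk, ap_eq _ _ _ _ _ ha hb, Nat.add_lt_add_iff_right]
  exact lex_aux _ _ _ _ _ (aG_par r j hj).1 (aG_par r a ha).1 (aO_lt _ _ _ _ hk) (aO_lt _ _ _ _ hb)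

theorem sig_ap (r q : ℕ) (σ : Equiv.Perm ℕ) (hσ : SigmaRQ r q σ) (L : Tag) (j k : ℕ)
    (hj : j ≤ r) (hk : k ≤ q) (hs : ¬ IsStar L j k) :
    σ (axisPos r q L j k) = meanderPos r q L j k := by
  obtain ⟨-, h1, h2⟩ := hσ
  have cv : ∀ p p' m m', σ p = m → p' = p → m' = m → σ p' = m' := by
    intro p p' m m' h e f; rw [e, f, h]
  rcases Nat.even_or_odd' j with ⟨x, rfl | rfl⟩ <;> rcases Nat.even_or_odd' k with ⟨y, rfl | rfl⟩ <;>
    cases L <;> rw [ap_eq _ _ _ _ _ hj hk, mp_eq _ _ _ _ _ hj] <;> simp only [aG, aO, mG, mO]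
  · have := h2 x y (by omega) (by omega) (by
      rintro ⟨rfl, rfl⟩; exact hs ⟨rfl, rfl, rfl⟩)
    refine cv _ _ _ _ this ?_ ?_
    · rw [if_neg (by omega), if_neg (by omega), show 2*r-2*x = 2*(r-x) by omega, mul_add]
      rw [show (q+1)*(2*(r-x)) = 2*((q+1)*(r-x)) by ring]; omega
    · rw [if_neg (by omega), if_neg (by omega)]; ring
  · have := h1 (r-x) y (by omega) (by omega)
    refine cv _ _ _ _ this ?_ ?_
    · rw [if_neg (by omega), if_neg (by omega), show 2*r-2*x = 2*(r-x) by omega]; ring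
    · rw [if_neg (by omega), if_neg (by omega), show (r+1)*(2*y) = 2*((r+1)*y) by ring]; omega
  · have := h1 (r-x) (q-y) (by omega) (by omega)
    refine cv _ _ _ _ this ?_ ?_
    · rw [if_neg (by omega), if_neg (by omega), show 2*r-2*x = 2*(r-x) by omega, mul_add]
      rw [show (q+1)*(2*(r-x)) = 2*((q+1)*(r-x)) by ring]; omega
    · rw [if_pos (by omega), if_pos (by omega), show 2*q+1-(2*y+1) = 2*(q-y) by omega, show (r+1)*(2*(q-y)) = 2*((r+1)*(q-y)) by ring]; omega
  · have := h2 x (q-y) (by omega) (by omega) (by omega)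
    refine cv _ _ _ _ this ?_ ?_
    · rw [if_neg (by omega), if_neg (by omega), show 2*r-2*x = 2*(r-x) by omega, mul_add]
      rw [show (q+1)*(2*(r-x)) = 2*((q+1)*(r-x)) by ring]; omega
    · rw [if_pos (by omega), if_pos (by omega), show 2*q+1-(2*y+1) = 2*(q-y) by omega]; ring
  · have := h1 x y (by omega) (by omega)
    refine cv _ _ _ _ this ?_ ?_
    · rw [if_pos (by omega), if_pos (by omega), show 2*x+1-1 = 2*x by omega]; ring
    · rw [if_neg (by omega), if_neg (by omega)]; ring
  · have := h2 (r-x) y (by omega) (by omega) (by omega)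
    refine cv _ _ _ _ this ?_ ?_
    · rw [if_pos (by omega), if_pos (by omega), show 2*x+1-1 = 2*x by omega, show r-(r-x) = x by omega, show (q+1)*(2*x) = 2*((q+1)*x) by ring]; omega
    · rw [if_neg (by omega), if_neg (by omega), show (r+1)*(2*y) = 2*((r+1)*y) by ring]; omega
  · have := h2 (r-x) (q-y) (by omega) (by omega) (by omega)
    refine cv _ _ _ _ this ?_ ?_
    · rw [if_pos (by omega), if_pos (by omega), show 2*x+1-1 = 2*x by omega, show r-(r-x) = x by omega, show (q+1)*(2*x) = 2*((q+1)*x) by ring]; omega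
    · rw [if_pos (by omega), if_pos (by omega), show 2*q+1-(2*y+1) = 2*(q-y) by omega, show (r+1)*(2*(q-y)) = 2*((r+1)*(q-y)) by ring]; omega
  · have := h1 x (q-y) (by omega) (by omega)
    refine cv _ _ _ _ this ?_ ?_
    · rw [if_pos (by omega), if_pos (by omega), show 2*x+1-1 = 2*x by omega, show (q+1)*(2*x) = 2*((q+1)*x) by ring]; omega
    · rw [if_pos (by omega), if_pos (by omega), show 2*q+1-(2*y+1) = 2*(q-y) by omega]; ring

theorem mp_bd (r q : ℕ) (L : Tag) (j k : ℕ) (hj : j ≤ r) (hk : k ≤ q) (hs : ¬ IsStar L j k) :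
    1 ≤ meanderPos r q L j k ∧ meanderPos r q L j k ≤ 2*(r+1)*(q+1)-1 := by
  rw [mp_eq _ _ _ _ _ hj]
  have h1 := mG_par q k hk
  have h2 := mO_lt r L j k hj
  have h3 : (r+1) * mG q k ≤ (r+1) * (2*q) := Nat.mul_le_mul_left _ h1.2
  have h4 : 2*(r+1)*(q+1) = (r+1)*(2*q) + 2*(r+1) := by ring
  refine ⟨?_, by omega⟩
  by_contra h
  have h5 : mO r L j k = 0 := by omega
  have h6 : (r+1) * mG q k = 0 := by omega
  have h7 : mG q k = 0 := by simpa using h6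
  apply hs
  cases L <;> simp only [mG, mO] at h5 h7 <;> unfold IsStar <;> split_ifs at h5 h7 <;>
    first | omega | (refine ⟨rfl, ?_, ?_⟩ <;> omega)

theorem mp_surj (r q w : ℕ) (h1 : 1 ≤ w) (h2 : w ≤ 2*(r+1)*(q+1)-1) :
    ∃ L j k, j ≤ r ∧ k ≤ q ∧ ¬ IsStar L j k ∧ meanderPos r q L j k = w := by
  suffices h : ∃ L j k, j ≤ r ∧ k ≤ q ∧ meanderPos r q L j k = w by
    obtain ⟨L, j, k, hj, hk, h⟩ := h
    refine ⟨L, j, k, hj, hk, ?_, h⟩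
    rintro ⟨rfl, rfl, rfl⟩
    simp [meanderPos] at h; omega
  obtain ⟨g, o, ho, hw⟩ : ∃ g o, o < 2*(r+1) ∧ w = (r+1)*(2*g) + o := by
    refine ⟨w / (2*(r+1)), w % (2*(r+1)), Nat.mod_lt _ (by omega), ?_⟩
    have := Nat.div_add_mod w (2*(r+1))
    rw [← this]
    simp only [this]
    nth_rw 1 [← this]
    ring
  have hg : g ≤ q := by
    by_contra hc
    have : (r+1)*(2*(q+1)) ≤ (r+1)*(2*g) := Nat.mul_le_mul_left _ (by omega)
    have h4 : 2*(r+1)*(q+1) = (r+1)*(2*(q+1)) := by ring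
    have : 0 < (r+1)*(2*(q+1)) := by positivity
    omega
  obtain ⟨k, hk, hG⟩ : ∃ k, k ≤ q ∧ mG q k = 2*g := by
    by_cases h : 2*g ≤ q
    · exact ⟨2*g, h, by unfold mG; split_ifs <;> omega⟩
    · exact ⟨2*q+1-2*g, by omega, by unfold mG; split_ifs <;> omega⟩
  obtain ⟨L, j, hj, hO⟩ : ∃ L j, j ≤ r ∧ mO r L j k = o := by
    by_cases h : o ≤ r <;> by_cases h' : k % 2 = 1
    · exact ⟨Tag.B, o, by omega, by simp [mO, h']⟩
    · exact ⟨Tag.A, o, by omega, by simp [mO, h']⟩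
    · exact ⟨Tag.A, 2*r+1-o, by omega, by simp [mO, h']; omega⟩
    · exact ⟨Tag.B, 2*r+1-o, by omega, by simp [mO, h']; omega⟩
  exact ⟨L, j, k, hj, hk, by rw [mp_eq _ _ _ _ _ hj, hG, hO, hw]⟩

def Zf (L : Tag) (j k : ℕ) (M : Tag) (a b : ℕ) : ℤ :=
  match L, M with
  | Tag.A, Tag.A => ((min j a : ℕ) : ℤ) + ((min k b : ℕ) : ℤ) +
      (if (j < a ∧ b < k) ∨ (a < j ∧ k < b) then 0 else -1)
  | Tag.A, Tag.B => ((min j a : ℕ) : ℤ) + ((min k b : ℕ) : ℤ) +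
      (if a < j ∧ b < k then 1 else if j ≤ a ∧ k ≤ b then -1 else 0)
  | Tag.B, Tag.A => ((min j a : ℕ) : ℤ) + ((min k b : ℕ) : ℤ) +
      (if j < a ∧ k < b then 1 else if a ≤ j ∧ b ≤ k then -1 else 0)
  | Tag.B, Tag.B => ((min j a : ℕ) : ℤ) + ((min k b : ℕ) : ℤ) +
      (if (j < a ∧ k < b) ∨ (a < j ∧ b < k) then 1 else 0)

def Mo (L : Tag) (j k : ℕ) : ℤ :=
  match L with
  | Tag.A => (j : ℤ) + k - 1
  | Tag.B => (j : ℤ) + k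

def Sg (r q : ℕ) (L : Tag) (j k : ℕ) (M : Tag) (a b : ℕ) : ℤ :=
  if aG r j < aG r a ∨ aG r j = aG r a ∧ aO q L j k < aO q M a b then -1
  else if aG r a < aG r j ∨ aG r a = aG r j ∧ aO q M a b < aO q L j k then 1 else 0

theorem Sg_eq (r q : ℕ) (L M : Tag) (j k a b : ℕ) (hj : j ≤ r) (hk : k ≤ q) (ha : a ≤ r) (hb : b ≤ q) :
    Int.sign ((axisPos r q L j k : ℤ) - axisPos r q M a b) = Sg r q L j k M a b := by
  unfold Sg
  simp only [← ap_lt r q L M j k a b hj hk ha hb, ← ap_lt r q M L a b j k ha hb hj hk]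
  split_ifs
  · rw [Int.sign_eq_neg_one_of_neg]; omega
  · rw [Int.sign_eq_one_of_pos]; omega
  · rw [Int.sign_eq_zero_iff_zero]; omega

/-- `Stp r q L' j' k' L j k`: the second label follows the first one along the meander. -/
def Stp (r q : ℕ) (L' : Tag) (j' k' : ℕ) (L : Tag) (j k : ℕ) : Prop :=
  (k % 2 = 0 ∧ L' = Tag.A ∧ L = Tag.A ∧ j = j'+1 ∧ k = k') ∨
  (k % 2 = 0 ∧ L' = Tag.B ∧ L = Tag.A ∧ j = 0 ∧ j' = 0 ∧ k = k'+2) ∨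
  (k % 2 = 0 ∧ L' = Tag.A ∧ L = Tag.B ∧ j = r ∧ j' = r ∧ k = k') ∨
  (k % 2 = 0 ∧ L' = Tag.B ∧ L = Tag.B ∧ j' = j+1 ∧ k = k') ∨
  (k % 2 = 1 ∧ L' = Tag.B ∧ L = Tag.B ∧ j = j'+1 ∧ k = k') ∨
  (k % 2 = 1 ∧ L' = Tag.A ∧ L = Tag.B ∧ j = 0 ∧ j' = 0 ∧ k' = k+2) ∨
  (k % 2 = 1 ∧ L' = Tag.B ∧ L = Tag.B ∧ j = 0 ∧ j' = 0 ∧ k = q ∧ q = k'+1) ∨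
  (k % 2 = 1 ∧ L' = Tag.B ∧ L = Tag.B ∧ j = 0 ∧ j' = 0 ∧ k+1 = q ∧ k' = q) ∨
  (k % 2 = 1 ∧ L' = Tag.B ∧ L = Tag.A ∧ j = r ∧ j' = r ∧ k = k') ∨
  (k % 2 = 1 ∧ L' = Tag.A ∧ L = Tag.A ∧ j' = j+1 ∧ k = k')

theorem Stp_ex (r q : ℕ) (hr : 1 ≤ r) (L : Tag) (j k : ℕ) (hj : j ≤ r) (hk : k ≤ q)
    (hs : ¬ IsStar L j k) (h1 : ¬ (L = Tag.A ∧ j = 1 ∧ k = 0)) :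
    ∃ L' j' k', j' ≤ r ∧ k' ≤ q ∧ ¬ IsStar L' j' k' ∧ Stp r q L' j' k' L j k := by
  unfold IsStar at *
  unfold Stp
  rcases Nat.mod_two_eq_zero_or_one k with h | h <;> cases L <;>
    simp only [h, true_and, reduceCtorEq, false_and, false_or, or_false, zero_ne_one, one_ne_zero] at hs h1 ⊢
  · by_cases h0 : j = 0
    · exact ⟨Tag.B, 0, k-2, by omega, by omega, by simp, Or.inr (by simp; omega)⟩
    · exact ⟨Tag.A, j-1, k, by omega, by omega, by simp; omega, Or.inl (by simp; omega)⟩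
  · by_cases h0 : j = r
    · exact ⟨Tag.A, j, k, by omega, by omega, by rintro ⟨-, h, -⟩; omega, by simp [h0]⟩
    · exact ⟨Tag.B, j+1, k, by omega, by omega, by simp, Or.inr (by simp)⟩
  · by_cases h0 : j = r
    · exact ⟨Tag.B, j, k, by omega, by omega, by simp, by simp [h0]⟩
    · exact ⟨Tag.A, j+1, k, by omega, by omega, by simp, Or.inr (by simp)⟩
  · by_cases h0 : j = 0
    · by_cases h2 : k + 2 ≤ q
      · exact ⟨Tag.A, 0, k+2, by omega, by omega, by simp, by simp; omega⟩
      · by_cases h3 : k = q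
        · exact ⟨Tag.B, 0, k-1, by omega, by omega, by simp, by simp; omega⟩
        · exact ⟨Tag.B, 0, q, by omega, by omega, by simp, by simp; omega⟩
    · exact ⟨Tag.B, j-1, k, by omega, by omega, by simp, by simp; omega⟩

theorem Stp_mp (r q : ℕ) (L L' : Tag) (j k j' k' : ℕ) (hj : j ≤ r) (hk : k ≤ q) (hj' : j' ≤ r) (hk' : k' ≤ q)
    (h : Stp r q L' j' k' L j k) : meanderPos r q L j k = meanderPos r q L' j' k' + 1 := by
  rw [mp_eq _ _ _ _ _ hj, mp_eq _ _ _ _ _ hj']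
  have key : (mG q k = mG q k' ∧ mO r L j k = mO r L' j' k' + 1) ∨
      (mG q k = mG q k' + 2 ∧ mO r L j k = 0 ∧ mO r L' j' k' = 2*r+1) := by
    unfold Stp at h
    rcases h with h | h | h | h | h | h | h | h | h | h <;> obtain ⟨h1, rfl, rfl, h2⟩ := h <;>
      simp only [mG, mO] <;> split_ifs <;> omega
  rcases key with ⟨h1, h2⟩ | ⟨h1, h2, h3⟩
  · rw [h1, h2]; omega
  · rw [h1, h2, h3, mul_add]; omega

/-- Flat form of the sign of the axis order. -/
def Sh (L : Tag) (j k : ℕ) (M : Tag) (a b : ℕ) : ℤ :=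
  if j < a then (if j % 2 = 1 then -1 else 1)
  else if a < j then (if a % 2 = 1 then 1 else -1)
  else match L, M with
    | Tag.A, Tag.A => if k < b then (if a % 2 = 1 then -1 else 1)
        else if b < k then (if a % 2 = 1 then 1 else -1) else 0
    | Tag.B, Tag.B => if k < b then (if a % 2 = 1 then 1 else -1)
        else if b < k then (if a % 2 = 1 then -1 else 1) else 0
    | Tag.A, Tag.B => if a % 2 = 1 then -1 else 1
    | Tag.B, Tag.A => if a % 2 = 1 then 1 else -1

theorem tri (x y : ℕ) :
    (x < y ∧ ¬ y < x ∧ x ≤ y ∧ ¬ y ≤ x ∧ x ≠ y ∧ min x y = x ∧ min y x = x) ∨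
    (y < x ∧ ¬ x < y ∧ y ≤ x ∧ ¬ x ≤ y ∧ x ≠ y ∧ min x y = y ∧ min y x = y) ∨ x = y := by
  omega

theorem tri1 {x y : ℕ} (h : x < y) :
    ¬ y < x ∧ x ≤ y ∧ ¬ y ≤ x ∧ min x y = x ∧ min y x = x := by
  omega

theorem Sh_eq (r q : ℕ) (L M : Tag) (j k a b : ℕ) (hj : j ≤ r) (hk : k ≤ q)
    (ha : a ≤ r) (hb : b ≤ q) : Sg r q L j k M a b = Sh L j k M a b := by
  have h1 : aG r j < aG r a ↔ (j < a ∧ j % 2 = 1) ∨ (a < j ∧ a % 2 = 0) := by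
    unfold aG; split_ifs <;> omega
  have h2 : aG r a < aG r j ↔ (a < j ∧ a % 2 = 1) ∨ (j < a ∧ j % 2 = 0) := by
    unfold aG; split_ifs <;> omega
  have h3 : aG r j = aG r a ↔ j = a := by omega
  have h4 : aG r a = aG r j ↔ j = a := by omega
  unfold Sg Sh
  simp only [h1, h2, h3, h4]
  rcases Nat.mod_two_eq_zero_or_one a with e | e <;>
  rcases tri j a with ⟨c1, c2, c3, c4, c5, c6, c7⟩ | ⟨c1, c2, c3, c4, c5, c6, c7⟩ | rfl
  · rcases Nat.mod_two_eq_zero_or_one j with e1 | e1 <;> simp [*]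
  · simp [*]
  · cases L <;> cases M <;> clear h1 h2 h3 h4 <;> simp [aO, e] <;> split_ifs <;> omega
  · rcases Nat.mod_two_eq_zero_or_one j with e1 | e1 <;> simp [*]
  · simp [*]
  · cases L <;> cases M <;> clear h1 h2 h3 h4 <;> simp [aO, e] <;> split_ifs <;> omega

theorem mO_even (r : ℕ) (L : Tag) (j k : ℕ) (hj : j ≤ r) :
    mO r L j k % 2 = match L with
      | Tag.A => (j + k) % 2
      | Tag.B => (j + k + 1) % 2 := by
  cases L <;> simp only [mO] <;> split_ifs <;> omega

set_option maxHeartbeats 0 in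
theorem Z_step (r q : ℕ) (L L' M : Tag) (j k j' k' a b : ℕ) (hj : j ≤ r) (hk : k ≤ q)
    (hj' : j' ≤ r) (hk' : k' ≤ q) (ha : a ≤ r) (hb : b ≤ q)
    (h : Stp r q L' j' k' L j k) (h1 : ¬ (M = L ∧ a = j ∧ b = k)) (h2 : ¬ (M = L' ∧ a = j' ∧ b = k')) :
    2 * (Zf L j k M a b - Zf L' j' k' M a b) =
      if mO r L j k % 2 = 0 then Sg r q L j k M a b - Sg r q L' j' k' M a b
      else Sg r q L' j' k' M a b - Sg r q L j k M a b := by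
  rw [Sh_eq r q L M j k a b hj hk ha hb, Sh_eq r q L' M j' k' a b hj' hk' ha hb, mO_even r L j k hj]
  unfold Stp at h
  rcases h with h | h | h | h | h | h | h | h | h | h <;> obtain ⟨h0, rfl, rfl, h3⟩ := h <;>
    cases M <;> simp only [Zf, Sh, true_and, reduceCtorEq, false_and, not_false_eq_true] at h1 h2 ⊢
  all_goals
    rcases lt_trichotomy j a with c | c | c <;>
    rcases lt_trichotomy j' a with d | d | d <;>
    first
    | (exfalso; clear h1 h2; omega)
    | (rcases lt_trichotomy k b with e | e | e <;>
       rcases lt_trichotomy k' b with f | f | f <;>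
       first
       | (exfalso; clear h1 h2; omega)
       | (exfalso; omega)
       | (try have c' := tri1 c
          try have d' := tri1 d
          try have e' := tri1 e
          try have f' := tri1 f
          try subst c
          try subst d
          try subst e
          try subst f
          simp only [*, lt_self_iff_false, le_refl, min_self, true_and, and_true, and_false, false_and,
            or_false, false_or, or_self, and_self, if_true, if_false, or_true]
          try clear c'
          try clear d'
          try clear e'
          try clear f'
          clear h1 h2
          omega))

theorem Mo_step (r q : ℕ) (L L' : Tag) (j k j' k' : ℕ) (hj : j ≤ r) (hk : k ≤ q)
    (hj' : j' ≤ r) (hk' : k' ≤ q)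
    (h : Stp r q L' j' k' L j k) :
    Mo L j k - Mo L' j' k' =
      if mO r L j k % 2 = 0 then Sg r q L j k L' j' k' else -Sg r q L j k L' j' k' := by
  unfold Stp at h
  rcases h with h | h | h | h | h | h | h | h | h | h <;> obtain ⟨h0, rfl, rfl, h3⟩ := h <;>
    simp only [Mo, Sg, mO, aG, aO]
  all_goals (split_ifs <;> omega)

theorem min_step (r q : ℕ) (L L' : Tag) (j k j' k' : ℕ)  (hr : 1 ≤ r) (hj : j ≤ r) (hk : k ≤ q)
    (hj' : j' ≤ r) (hk' : k' ≤ q)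
    (h : Stp r q L' j' k' L j k) :
    Zf L j k L' j' k' = min (Mo L' j' k') (Mo L j k) := by
  unfold Stp at h
  rcases h with h | h | h | h | h | h | h | h | h | h <;> obtain ⟨h0, rfl, rfl, h3⟩ := h <;>
    simp only [Mo, Zf] <;> split_ifs <;> omega

theorem val_base (r q : ℕ) : meanderPos r q Tag.A 1 0 = 1 := by
  simp [meanderPos]

theorem sym_mp (r q : ℕ) (σ : Equiv.Perm ℕ) (hσ : SigmaRQ r q σ) (L : Tag) (j k : ℕ)
    (hj : j ≤ r) (hk : k ≤ q) (hs : ¬ IsStar L j k) :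
    σ.symm (meanderPos r q L j k) = axisPos r q L j k := by
  rw [Equiv.symm_apply_eq]; exact (sig_ap r q σ hσ L j k hj hk hs).symm

theorem mp_par (r q : ℕ) (L : Tag) (j k : ℕ) (hj : j ≤ r) (hk : k ≤ q) :
    ((-1 : ℤ)) ^ (meanderPos r q L j k) = if mO r L j k % 2 = 0 then 1 else -1 := by
  rw [mp_eq _ _ _ _ _ hj]
  obtain ⟨x, hx⟩ : ∃ x, mG q k = 2 * x := ⟨mG q k / 2, by have := (mG_par q k hk).1; omega⟩
  rw [pow_add, hx, show (r+1)*(2*x) = 2*((r+1)*x) by ring, pow_mul]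
  norm_num
  split_ifs with h
  · exact Even.neg_one_pow (Nat.even_iff.2 h)
  · exact Odd.neg_one_pow (Nat.odd_iff.2 (by omega))

theorem mp_inj (r q : ℕ) (L M : Tag) (j k a b : ℕ) (hj : j ≤ r) (hk : k ≤ q) (ha : a ≤ r) (hb : b ≤ q)
    (h : meanderPos r q L j k = meanderPos r q M a b) : L = M ∧ j = a ∧ k = b := by
  have h1 := mp_lt r q L M j k a b hj hk ha hb
  have h2 := mp_lt r q M L a b j k ha hb hj hk
  have h3 : ¬ (mG q k < mG q b ∨ mG q k = mG q b ∧ mO r L j k < mO r M a b) := by omega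
  have h4 : ¬ (mG q b < mG q k ∨ mG q b = mG q k ∧ mO r M a b < mO r L j k) := by omega
  have h5 : mG q k = mG q b := by omega
  have h6 : mO r L j k = mO r M a b := by omega
  have h7 : k = b := by unfold mG at h5; split_ifs at h5 <;> omega
  subst h7
  cases L <;> cases M <;> simp only [mO] at h6 <;> split_ifs at h6 <;>
    first | (exfalso; omega) | (refine ⟨rfl, ?_, rfl⟩; omega)

theorem morse_val (r q : ℕ) (hr : 1 ≤ r) (σ : Equiv.Perm ℕ) (hσ : SigmaRQ r q σ) :
    ∀ (m : ℕ) (L : Tag) (j k : ℕ), j ≤ r → k ≤ q → ¬ IsStar L j k → meanderPos r q L j k = m →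
      morse σ m = Mo L j k := by
  intro m
  induction m with
  | zero =>
    intro L j k hj hk hs hm
    have := (mp_bd r q L j k hj hk hs).1
    omega
  | succ m ih =>
    intro L j k hj hk hs hm
    by_cases h1 : L = Tag.A ∧ j = 1 ∧ k = 0
    · obtain ⟨rfl, rfl, rfl⟩ := h1
      rw [val_base] at hm
      rw [← hm]; simp [morse, Mo]
    · obtain ⟨L', j', k', hj', hk', hs', hst⟩ := Stp_ex r q hr L j k hj hk hs h1
      have e := Stp_mp r q L L' j k j' k' hj hk hj' hk' hst
      have e' : meanderPos r q L' j' k' = m := by omega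
      have b := (mp_bd r q L' j' k' hj' hk' hs').1
      have i := ih L' j' k' hj' hk' hs' e'
      obtain ⟨n, rfl⟩ : ∃ n, m = n + 1 := ⟨m - 1, by omega⟩
      have hz := Mo_step r q L L' j k j' k' hj hk hj' hk' hst
      have p := mp_par r q L j k hj hk
      rw [morse, i, show n + 2 = meanderPos r q L j k by omega, ← e', p,
        sym_mp r q σ hσ L j k hj hk hs, sym_mp r q σ hσ L' j' k' hj' hk' hs',
        Sg_eq r q L L' j k j' k' hj hk hj' hk']
      split_ifs at hz ⊢ <;> omega

theorem Zf_self (L : Tag) (j k : ℕ) : Zf L j k L j k = Mo L j k := by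
  cases L <;> simp [Zf, Mo]; omega

theorem Zf_base (M : Tag) (a b : ℕ) (hs : ¬ IsStar M a b) : Zf Tag.A 1 0 M a b = 0 := by
  cases M <;> simp only [Zf]
  · have : ¬ (a = 0 ∧ b = 0) := fun h => hs ⟨rfl, h.1, h.2⟩
    split_ifs <;> omega
  · split_ifs <;> omega

theorem z_val (r q : ℕ) (hr : 1 ≤ r) (σ : Equiv.Perm ℕ) (hσ : SigmaRQ r q σ)
    (M : Tag) (a b : ℕ) (ha : a ≤ r) (hb : b ≤ q) (ht : ¬ IsStar M a b) :
    ∀ (m : ℕ) (L : Tag) (j k : ℕ), j ≤ r → k ≤ q → ¬ IsStar L j k → meanderPos r q L j k = m →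
      zfun σ m (meanderPos r q M a b) = Zf L j k M a b := by
  unfold zfun
  intro m
  induction m with
  | zero =>
    intro L j k hj hk hs hm
    have := (mp_bd r q L j k hj hk hs).1
    omega
  | succ m ih =>
    intro L j k hj hk hs hm
    by_cases h1 : L = Tag.A ∧ j = 1 ∧ k = 0
    · obtain ⟨rfl, rfl, rfl⟩ := h1
      rw [val_base] at hm
      rw [← hm, Zf_base M a b ht, zrec]
    · obtain ⟨L', j', k', hj', hk', hs', hst⟩ := Stp_ex r q hr L j k hj hk hs h1
      have e := Stp_mp r q L L' j k j' k' hj hk hj' hk' hst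
      have e' : meanderPos r q L' j' k' = m := by omega
      have b1 := (mp_bd r q L' j' k' hj' hk' hs').1
      have i := ih L' j' k' hj' hk' hs' e'
      obtain ⟨n, rfl⟩ : ∃ n, m = n + 1 := ⟨m - 1, by omega⟩
      have p := mp_par r q L j k hj hk
      rw [zrec]
      split_ifs with c1 c2
      · obtain ⟨rfl, rfl, rfl⟩ := mp_inj r q L M j k a b hj hk ha hb (by omega)
        rw [morse_val r q hr σ hσ _ L j k hj hk hs rfl, Zf_self]
      · obtain ⟨rfl, rfl, rfl⟩ := mp_inj r q L' M j' k' a b hj' hk' ha hb (by omega)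
        rw [morse_val r q hr σ hσ _ L' j' k' hj' hk' hs' rfl,
          morse_val r q hr σ hσ _ L j k hj hk hs e, min_step r q L L' j k j' k' hr hj hk hj' hk' hst]
      · have hz := Z_step r q L L' M j k j' k' a b hj hk hj' hk' ha hb hst
          (by rintro ⟨rfl, rfl, rfl⟩; omega) (by rintro ⟨rfl, rfl, rfl⟩; omega)
        rw [i, show n + 2 = meanderPos r q L j k by omega, ← e', p,
          sym_mp r q σ hσ L j k hj hk hs, sym_mp r q σ hσ L' j' k' hj' hk' hs',
          sym_mp r q σ hσ M a b ha hb ht,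
          Sg_eq r q L M j k a b hj hk ha hb, Sg_eq r q L' M j' k' a b hj' hk' ha hb]
        split_ifs at hz ⊢ <;> omega

/-- Flat form of the meander order. -/
def Ml (L : Tag) (j k : ℕ) (M : Tag) (a b : ℕ) : Prop :=
  (k < b ∧ k % 2 = 0) ∨ (b < k ∧ b % 2 = 1) ∨ (k = b ∧
    match L, M with
    | Tag.A, Tag.A => (j < a ∧ k % 2 = 0) ∨ (a < j ∧ k % 2 = 1)
    | Tag.B, Tag.B => (j < a ∧ k % 2 = 1) ∨ (a < j ∧ k % 2 = 0)
    | Tag.A, Tag.B => k % 2 = 0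
    | Tag.B, Tag.A => k % 2 = 1)

theorem Ml_iff (r q : ℕ) (L M : Tag) (j k a b : ℕ) (hj : j ≤ r) (hk : k ≤ q) (ha : a ≤ r) (hb : b ≤ q) :
    meanderPos r q L j k < meanderPos r q M a b ↔ Ml L j k M a b := by
  rw [mp_lt r q L M j k a b hj hk ha hb]
  have h1 : mG q k < mG q b ↔ (k < b ∧ k % 2 = 0) ∨ (b < k ∧ b % 2 = 1) := by
    unfold mG; split_ifs <;> omega
  have h3 : mG q k = mG q b ↔ k = b := by
    unfold mG; split_ifs <;> omega
  unfold Ml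
  rw [h1, h3, or_assoc]
  refine or_congr Iff.rfl (or_congr Iff.rfl (and_congr_right ?_))
  rintro rfl
  cases L <;> cases M <;> simp only [mO] <;> split_ifs <;> omega

theorem edge_no (r q : ℕ) (L L' : Tag) (j k j' k' : ℕ) (hj : j ≤ r) (hk : k ≤ q) (hj' : j' ≤ r)
    (hk' : k' ≤ q) (hm : Mo L j k = Mo L' j' k' + 1) (hn : ¬ EdgeSpec r q L j k L' j' k') :
    ∃ x y, x ≤ r ∧ y ≤ q ∧
      ((Ml L j k Tag.B x y ∧ Ml Tag.B x y L' j' k') ∨ (Ml L' j' k' Tag.B x y ∧ Ml Tag.B x y L j k)) ∧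
      Zf L j k Tag.B x y = Zf Tag.B x y L' j' k' ∧ Zf Tag.B x y L' j' k' = Zf L j k L' j' k' := by
  have key : (j < j' ∧ k' < k) ∨ (j' < j ∧ k < k') ∨
      (L = Tag.A ∧ L' = Tag.B ∧ j = j' + 1 ∧ k = k' + 1) := by
    cases L <;> cases L' <;> simp [EdgeSpec, Mo] at hm hn ⊢ <;> omega
  rcases key with ⟨h1, h2⟩ | ⟨h1, h2⟩ | ⟨rfl, rfl, rfl, rfl⟩
  · refine ⟨j, k', hj, hk', ?_, ?_⟩
    · cases L <;> cases L' <;> simp only [Ml, Mo, true_and] at hm ⊢ <;> omega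
    · cases L <;> cases L' <;> simp only [Zf, Mo] at hm ⊢ <;> omega
  · refine ⟨j', k, hj', hk, ?_, ?_⟩
    · cases L <;> cases L' <;> simp only [Ml, Mo, true_and] at hm ⊢ <;> omega
    · cases L <;> cases L' <;> simp only [Zf, Mo] at hm ⊢ <;> omega
  · refine ⟨j' + 1, k' + 1, hj, hk, ?_, ?_⟩
    · simp only [Ml, true_and]; omega
    · simp only [Zf]; omega

set_option maxHeartbeats 0 in
theorem edge_yes (r q : ℕ) (L L' T : Tag) (j k j' k' x y : ℕ) (hs : ¬ IsStar L j k)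
    (hs' : ¬ IsStar L' j' k') (ht : ¬ IsStar T x y) (h : EdgeSpec r q L j k L' j' k')
    (hw : (Ml L j k T x y ∧ Ml T x y L' j' k') ∨ (Ml L' j' k' T x y ∧ Ml T x y L j k))
    (hz1 : Zf L j k T x y = Zf T x y L' j' k') (hz2 : Zf T x y L' j' k' = Zf L j k L' j' k') : False := by
  unfold IsStar at hs hs' ht
  unfold EdgeSpec at h
  rcases h with h | h | h | h | h | h | h <;> obtain ⟨rfl, rfl, rfl, h⟩ := h <;>
    cases T <;> simp only [Zf, Ml, true_and, reduceCtorEq, false_and, not_false_eq_true, lt_self_iff_false, false_or, or_false, le_refl, and_false, and_true, min_self, if_false, if_true] at hs hs' ht hw hz1 hz2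
  all_goals
    split_ifs at hz1 hz2 <;> omega

theorem edge_mo (r q : ℕ) (L L' : Tag) (j k j' k' : ℕ) 
    (h : EdgeSpec r q L j k L' j' k') : Mo L j k = Mo L' j' k' + 1 := by
  unfold EdgeSpec at h
  rcases h with h | h | h | h | h | h | h <;> obtain ⟨rfl, rfl, rfl, h⟩ := h <;> simp only [Mo] <;> omega

theorem star_no (r q : ℕ) (σ : Equiv.Perm ℕ) (hσ : SigmaRQ r q σ) (L : Tag) (j k : ℕ) (h : IsStar L j k) :
    2*(r+1)*(q+1)-1 < σ (axisPos r q L j k) := by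
  obtain ⟨rfl, rfl, rfl⟩ := h
  have e : axisPos r q Tag.A 0 0 = 2*(r+1)*(q+1) := by
    simp [axisPos]; ring
  have p : 0 < 2*(r+1)*(q+1) := by positivity
  rw [e, hσ.1 _ (by simp only [Set.mem_Icc]; omega)]
  omega

/-- the connection digraph of `σ_{rq}`, transported to labels,
consists exactly of the edges of the two Chafee-Infante stack decompositions. -/
theorem stmt_9 (r q : ℕ) (hr : 1 ≤ r) (hq : 1 ≤ q) (hrq : 1 < r*q)
    (σ : Equiv.Perm ℕ) (hσ : SigmaRQ r q σ) :
    ∀ (L L' : Tag) (j k j' k' : ℕ), j ≤ r → k ≤ q → j' ≤ r → k' ≤ q →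
      (hasEdge (2*(r+1)*(q+1)-1) σ
          (σ (axisPos r q L j k)) (σ (axisPos r q L' j' k')) ↔
        (¬ IsStar L j k ∧ ¬ IsStar L' j' k' ∧ EdgeSpec r q L j k L' j' k')) := by
  intro L L' j k j' k' hj hk hj' hk'
  by_cases hs : IsStar L j k
  · have := star_no r q σ hσ L j k hs
    constructor
    · intro h
      have := h.2.1
      omega
    · intro h
      exact absurd hs h.1
  by_cases hs' : IsStar L' j' k'
  · have := star_no r q σ hσ L' j' k' hs'
    constructor
    · intro h
      have := h.2.2.2.1
      omega
    · intro h
      exact absurd hs' h.2.1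
  rw [sig_ap r q σ hσ L j k hj hk hs, sig_ap r q σ hσ L' j' k' hj' hk' hs']
  have b1 := mp_bd r q L j k hj hk hs
  have b2 := mp_bd r q L' j' k' hj' hk' hs'
  have m1 := morse_val r q hr σ hσ _ L j k hj hk hs rfl
  have m2 := morse_val r q hr σ hσ _ L' j' k' hj' hk' hs' rfl
  have z0 := z_val r q hr σ hσ L' j' k' hj' hk' hs' _ L j k hj hk hs rfl
  unfold hasEdge
  rw [m1, m2, z0]
  constructor
  · rintro ⟨-, -, -, -, hm, hn⟩
    refine ⟨hs, hs', ?_⟩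
    by_contra hE
    obtain ⟨x, y, hx, hy, ho, hz1, hz2⟩ := edge_no r q L L' j k j' k' hj hk hj' hk' hm hE
    have hB : ¬ IsStar Tag.B x y := by simp [IsStar]
    rw [← Ml_iff r q _ _ _ _ _ _ hj hk hx hy, ← Ml_iff r q _ _ _ _ _ _ hx hy hj' hk',
      ← Ml_iff r q _ _ _ _ _ _ hj' hk' hx hy, ← Ml_iff r q _ _ _ _ _ _ hx hy hj hk] at ho
    refine hn ⟨meanderPos r q Tag.B x y, by omega, by omega, ?_, ?_⟩
    · rw [z_val r q hr σ hσ Tag.B x y hx hy hB _ L j k hj hk hs rfl,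
        z_val r q hr σ hσ L' j' k' hj' hk' hs' _ Tag.B x y hx hy hB rfl, hz1]
    · rw [z_val r q hr σ hσ L' j' k' hj' hk' hs' _ Tag.B x y hx hy hB rfl, hz2]
  · rintro ⟨-, -, hE⟩
    refine ⟨b1.1, b1.2, b2.1, b2.2, edge_mo r q L L' j k j' k' hE, ?_⟩
    rintro ⟨w, hw1, hw2, hz1, hz2⟩
    obtain ⟨T, x, y, hx, hy, ht, rfl⟩ := mp_surj r q w (by omega) (by omega)
    rw [z_val r q hr σ hσ T x y hx hy ht _ L j k hj hk hs rfl,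
      z_val r q hr σ hσ L' j' k' hj' hk' hs' _ T x y hx hy ht rfl] at hz1
    rw [z_val r q hr σ hσ L' j' k' hj' hk' hs' _ T x y hx hy ht rfl] at hz2
    refine edge_yes r q L L' T j k j' k' x y hs hs' ht hE ?_ hz1 hz2
    rw [← Ml_iff r q _ _ _ _ _ _ hj hk hx hy, ← Ml_iff r q _ _ _ _ _ _ hx hy hj' hk',
      ← Ml_iff r q _ _ _ _ _ _ hj' hk' hx hy, ← Ml_iff r q _ _ _ _ _ _ hx hy hj hk]
    omega
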